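/- Weak Harnack inequality for subsolutions, non-divergence form (Krylov–Safonov): For every η > 0 there exists c(η) ∈ (0,1), depending only on η, n, λ, Λ, such that the following holds. Let A be uniformly elliptic on the unit ball B_1 ⊂ ℝ^n and let φ ∈ C²(B_1) satisfy tr(A(x) D²φ(x)) ≥ 0 for all x ∈ B_1 and φ ≤ 1 in B_1. If the Lebesgue measure of {x ∈ B_1 : φ(x) ≤ 0} is at least η, then φ ≤ 1 − c(η) in B_{1/2}. -/

import Mathlib

open MeasureTheory Metric Filter

noncomputable section

/-- `ℝ^n` with the Euclidean norm. -/
abbrev Eucl (n : ℕ) : Type := EuclideanSpace ℝ (Fin n)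

/-- Uniform ellipticity of the coefficient matrix `A` on `Ω`:
`λ|ξ|² ≤ ξ·(A(x)ξ)` and `|A(x)ξ| ≤ Λ|ξ|`. -/
def UnifElliptic {n : ℕ} (lam Lam : ℝ) (Ω : Set (Eucl n))
    (A : Eucl n → Matrix (Fin n) (Fin n) ℝ) : Prop :=
  ∀ x ∈ Ω, ∀ ξ : Eucl n,
    lam * ‖ξ‖ ^ 2 ≤ ∑ i, ξ i * ∑ j, A x i j * ξ j ∧
    Real.sqrt (∑ i, (∑ j, A x i j * ξ j) ^ 2) ≤ Lam * ‖ξ‖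

/-- `u` is a `C²` subsolution: `tr(A D²u) ≥ 0` on the open set `Ω`. -/
def NondivSubsolution {n : ℕ} (A : Eucl n → Matrix (Fin n) (Fin n) ℝ) (Ω : Set (Eucl n))
    (u : Eucl n → ℝ) : Prop :=
  ContDiffOn ℝ 2 u Ω ∧ ∀ x ∈ Ω,
    0 ≤ ∑ i, ∑ j, A x i j *
      fderiv ℝ (fun y => fderiv ℝ u y (EuclideanSpace.single i 1)) x
        (EuclideanSpace.single j 1)

/-!
Apply a weak Harnack inequality to the nonnegative supersolution `u = 1 - φ`. Concave paraboloids
of fixed opening are slid up until they touch the graph of `u`. The contact point determines the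
vertex, and the equation bounds the Jacobian of the map from contact points to vertices. Hence, by
the area formula, if `u` is small at one point then a sublevel set of `u` fills a fixed proportion
of a ball around it. Contrapositively, where the sublevel set `{u < t}` has small density, a
fraction of `t` bounds `u` from below on a smaller ball, and comparison with a Gaussian barrier
spreads this bound to a larger concentric ball.

By Lebesgue density, `{u < t}` has small density in all small balls around almost every point of
`G = {u ≥ 1}`. If it has large density at scale `r` around every point of `G`, then at an
intermediate scale between the two regimes the part of `{u < t}` in the ball lies in the layer
`{γt ≤ u < t}`, and the Vitali covering lemma shows that this layer has measure at least a fixed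
multiple of `|G|`. The layers with `t = γ ^ k` are disjoint, so this cannot happen for every `k` up
to a large constant: some ball of radius `r` carries a lower bound for `u`. A chain of overlapping
balls transports that bound to the rest of the domain.
-/

open scoped Topology ENNReal Matrix Gradient RealInnerProductSpace

section EllipticMatrices

variable {ι : Type*} [Fintype ι]

lemma trace_mul_nonneg_of_posSemidef {A P : Matrix ι ι ℝ} (hA : ∀ ξ : ι → ℝ, 0 ≤ ξ ⬝ᵥ A *ᵥ ξ)
    (hP : P.PosSemidef) : 0 ≤ (A * P).trace := by
  obtain ⟨B, rfl⟩ : ∃ B : Matrix ι ι ℝ, P = Bᴴ * B := by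
    classical
    open scoped MatrixOrder in
    exact CStarAlgebra.nonneg_iff_eq_star_mul_self.mp hP.nonneg
  rw [← Matrix.mul_assoc, Matrix.trace_mul_cycle]
  refine Finset.sum_nonneg fun k _ ↦ ?_
  rw [Matrix.mul_assoc]
  exact hA (B k)

lemma det_le_trace_pow_card [DecidableEq ι] {P : Matrix ι ι ℝ} (hP : P.PosSemidef) :
    P.det ≤ P.trace ^ Fintype.card ι := by
  have hpos : ∀ i, 0 ≤ hP.1.eigenvalues i := hP.eigenvalues_nonneg
  simp only [hP.1.det_eq_prod_eigenvalues, hP.1.trace_eq_sum_eigenvalues,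
    RCLike.ofReal_real_eq_id, id]
  calc ∏ i, hP.1.eigenvalues i ≤ ∏ _i : ι, ∑ j, hP.1.eigenvalues j :=
        Finset.prod_le_prod (fun i _ ↦ hpos i) fun i hi ↦
          Finset.single_le_sum (fun j _ ↦ hpos j) hi
    _ = (∑ j, hP.1.eigenvalues j) ^ Fintype.card ι := by simp

/-- Scale-invariant ellipticity: the trace of `A` is positive and dominated by `κ` times the
quadratic form of `A` on unit vectors. For `λ|ξ|² ≤ ξ·Aξ` and `|Aξ| ≤ Λ|ξ|` one may take
`κ = nΛ/λ`. -/
structure EllipticRatio (κ : ℝ) (A : Matrix ι ι ℝ) : Prop where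
  trace_pos : 0 < A.trace
  trace_mul_le : ∀ ξ : ι → ℝ, A.trace * (ξ ⬝ᵥ ξ) ≤ κ * (ξ ⬝ᵥ A *ᵥ ξ)

lemma EllipticRatio.trace_mul_trace_le {κ : ℝ} {A P : Matrix ι ι ℝ} (hA : EllipticRatio κ A)
    (hP : P.PosSemidef) : A.trace * P.trace ≤ κ * (A * P).trace := by
  classical
  have hquad (ξ : ι → ℝ) : 0 ≤ ξ ⬝ᵥ (κ • A - A.trace • 1) *ᵥ ξ := by
    simp only [Matrix.sub_mulVec, Matrix.smul_mulVec, Matrix.one_mulVec, dotProduct_sub,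
      dotProduct_smul, smul_eq_mul]
    exact sub_nonneg.mpr (hA.trace_mul_le ξ)
  have := trace_mul_nonneg_of_posSemidef hquad hP
  simp only [Matrix.sub_mul, Matrix.smul_mul, Matrix.one_mul, Matrix.trace_sub,
    Matrix.trace_smul, smul_eq_mul] at this
  linarith

lemma UnifElliptic.ellipticRatio {n : ℕ} {lam Lam : ℝ} {Ω : Set (Eucl n)}
    {A : Eucl n → Matrix (Fin n) (Fin n) ℝ} (hA : UnifElliptic lam Lam Ω A) (hn : 0 < n)
    (hlam : 0 < lam) {x : Eucl n} (hx : x ∈ Ω) :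
    EllipticRatio (n * Lam / lam) (A x) := by
  have hlower (ξ : Fin n → ℝ) : lam * (ξ ⬝ᵥ ξ) ≤ ξ ⬝ᵥ A x *ᵥ ξ := by
    have h := (hA x hx (WithLp.toLp 2 ξ)).1
    rw [EuclideanSpace.real_norm_sq_eq] at h
    simpa [dotProduct, Matrix.mulVec, sq] using h
  have hdiag_lower (i : Fin n) : lam ≤ A x i i := by
    simpa using hlower (Pi.single i 1)
  have hdiag_upper (i : Fin n) : A x i i ≤ Lam := by
    have h := (hA x hx (EuclideanSpace.single i 1)).2
    simp only [PiLp.single_apply, mul_ite, mul_one, mul_zero, Finset.sum_ite_eq',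
      Finset.mem_univ, if_true, PiLp.norm_single, norm_one] at h
    refine (Real.le_sqrt_of_sq_le ?_).trans h
    exact Finset.single_le_sum (f := fun k ↦ A x k i ^ 2) (fun k _ ↦ sq_nonneg _)
      (Finset.mem_univ i)
  have htrace_upper : (A x).trace ≤ n * Lam := by
    simpa [Matrix.trace] using Finset.sum_le_card_nsmul Finset.univ (fun i ↦ A x i i) Lam
      fun i _ ↦ hdiag_upper i
  refine ⟨Finset.sum_pos (fun i _ ↦ hlam.trans_le (hdiag_lower i))
    ⟨⟨0, hn⟩, Finset.mem_univ _⟩, fun ξ ↦ ?_⟩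
  have hξ : 0 ≤ ξ ⬝ᵥ ξ := Finset.sum_nonneg fun i _ ↦ mul_self_nonneg (ξ i)
  have hLam : 0 ≤ Lam := (hlam.le.trans (hdiag_lower ⟨0, hn⟩)).trans (hdiag_upper _)
  calc (A x).trace * (ξ ⬝ᵥ ξ) ≤ n * Lam * (ξ ⬝ᵥ ξ) := by gcongr
    _ = n * Lam / lam * (lam * (ξ ⬝ᵥ ξ)) := by field_simp
    _ ≤ n * Lam / lam * (ξ ⬝ᵥ A x *ᵥ ξ) := by gcongr; exact hlower ξ

end EllipticMatrices

section SecondDerivativeTest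

lemma deriv_deriv_nonneg_of_isLocalMin {f : ℝ → ℝ} {a : ℝ} (hmin : IsLocalMin f a)
    (hf : ContinuousAt f a) : 0 ≤ deriv (deriv f) a := by
  by_contra! hneg
  have hmax : IsLocalMax f a := isLocalMax_of_deriv_deriv_neg hneg hmin.deriv_eq_zero hf
  have hconst : f =ᶠ[𝓝 a] fun _ ↦ f a := by
    filter_upwards [hmin, hmax] with s hge hle using le_antisymm hle hge
  have : deriv (deriv f) a = 0 := by simpa using hconst.deriv.deriv_eq
  exact hneg.ne this

variable {E : Type*} [NormedAddCommGroup E] [NormedSpace ℝ E]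

lemma differentiableAt_fderiv {u : E → ℝ} {x : E} (hu : ContDiffAt ℝ 2 u x) :
    DifferentiableAt ℝ (fderiv ℝ u) x :=
  (hu.fderiv_right (m := 1) (by norm_num)).differentiableAt (by norm_num)

lemma eventually_differentiableAt {u : E → ℝ} {x : E} (hu : ContDiffAt ℝ 2 u x) :
    ∀ᶠ y in 𝓝 x, DifferentiableAt ℝ u y :=
  (hu.eventually (by simp)).mono fun _ hy ↦ hy.differentiableAt (by norm_num)

lemma fderiv_fderiv_nonneg_of_isLocalMin {u : E → ℝ} {x : E} (hmin : IsLocalMin u x)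
    (hu : ContDiffAt ℝ 2 u x) (ξ : E) : 0 ≤ fderiv ℝ (fderiv ℝ u) x ξ ξ := by
  let line (s : ℝ) : E := x + s • ξ
  have hline (s : ℝ) : HasDerivAt line ξ s := by
    simpa [line] using ((hasDerivAt_id s).smul_const ξ).const_add x
  have hline0 : line 0 = x := by simp [line]
  have htend : Tendsto line (𝓝 0) (𝓝 x) := by
    simpa only [hline0] using (hline 0).continuousAt.tendsto
  have hmin0 : IsLocalMin (u ∘ line) 0 := by
    filter_upwards [htend.eventually hmin] with s hs
    simpa [hline0] using hs
  have hcont : ContinuousAt (u ∘ line) 0 := by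
    refine ContinuousAt.comp ?_ (hline 0).continuousAt
    simpa only [hline0] using hu.continuousAt
  have hderiv : deriv (u ∘ line) =ᶠ[𝓝 0] fun s ↦ fderiv ℝ u (line s) ξ := by
    filter_upwards [htend.eventually (eventually_differentiableAt hu)] with s hs
    exact (hs.hasFDerivAt.comp_hasDerivAt s (hline s)).deriv
  have hderiv2 : deriv (deriv (u ∘ line)) 0 = fderiv ℝ (fderiv ℝ u) x ξ ξ := by
    have hD2 : HasFDerivAt (fderiv ℝ u) (fderiv ℝ (fderiv ℝ u) x) (line 0) := by
      simpa only [hline0] using (differentiableAt_fderiv hu).hasFDerivAt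
    rw [hderiv.deriv_eq]
    simpa using ((hD2.comp_hasDerivAt 0 (hline 0)).clm_apply (hasDerivAt_const 0 ξ)).deriv
  rw [← hderiv2]
  exact deriv_deriv_nonneg_of_isLocalMin hmin0 hcont

end SecondDerivativeTest

section Hessian

variable {n : ℕ} {u q : Eucl n → ℝ} {x : Eucl n}

/-- The Hessian matrix of `u` at `x`, with entries `∂ᵢ(∂ⱼu)(x)`. This order of differentiation
makes `tr(A D²u)` the double sum of `NondivSubsolution` without using symmetry of `D²u`. -/
def hess (u : Eucl n → ℝ) (x : Eucl n) : Matrix (Fin n) (Fin n) ℝ :=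
  Matrix.of fun i j ↦ fderiv ℝ (fun y ↦ fderiv ℝ u y (EuclideanSpace.single j 1)) x
    (EuclideanSpace.single i 1)

lemma NondivSubsolution.trace_mul_hess_nonneg {A : Eucl n → Matrix (Fin n) (Fin n) ℝ}
    {Ω : Set (Eucl n)} (hu : NondivSubsolution A Ω u) (hx : x ∈ Ω) :
    0 ≤ (A x * hess u x).trace :=
  hu.2 x hx

lemma hess_const_sub (c : ℝ) : hess (fun y ↦ c - u y) x = -hess u x := by
  ext i j
  simp [hess, fderiv_const_sub]

lemma hess_apply (hu : ContDiffAt ℝ 2 u x) (i j : Fin n) :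
    hess u x i j = fderiv ℝ (fderiv ℝ u) x (EuclideanSpace.single i 1)
      (EuclideanSpace.single j 1) := by
  simp only [hess, Matrix.of_apply]
  rw [fderiv_clm_apply (differentiableAt_fderiv hu) (by fun_prop)]
  simp

lemma hess_sub (hu : ContDiffAt ℝ 2 u x) (hq : ContDiffAt ℝ 2 q x) :
    hess (u - q) x = hess u x - hess q x := by
  have hfderiv : fderiv ℝ (u - q) =ᶠ[𝓝 x] fderiv ℝ u - fderiv ℝ q := by
    filter_upwards [eventually_differentiableAt hu, eventually_differentiableAt hq] with y hy hy'
    exact fderiv_sub hy hy'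
  ext i j
  rw [hess_apply (u := u - q) (hu.sub hq), hfderiv.fderiv_eq,
    fderiv_sub (differentiableAt_fderiv hu) (differentiableAt_fderiv hq)]
  simp [hess_apply hu, hess_apply hq]

lemma fderiv_fderiv_apply (hu : ContDiffAt ℝ 2 u x) (ξ ζ : Eucl n) :
    fderiv ℝ (fderiv ℝ u) x ξ ζ = ξ ⬝ᵥ hess u x *ᵥ ζ := by
  have hsum (v : Eucl n) : v = ∑ i, v i • EuclideanSpace.single i (1 : ℝ) := by
    ext j; simp [Pi.single_apply]
  conv_lhs => rw [hsum ξ, hsum ζ]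
  simp only [map_sum, map_smul, sum_apply, smul_apply, ← hess_apply hu, smul_eq_mul, dotProduct,
    Matrix.mulVec, Finset.mul_sum]
  rw [Finset.sum_comm]
  exact Finset.sum_congr rfl fun i _ ↦ Finset.sum_congr rfl fun j _ ↦ by ring

lemma isHermitian_hess (hu : ContDiffAt ℝ 2 u x) : (hess u x).IsHermitian := by
  ext i j
  simpa [hess_apply hu] using hu.isSymmSndFDerivAt (by simp) _ _

lemma posSemidef_hess_of_isLocalMin (hmin : IsLocalMin u x) (hu : ContDiffAt ℝ 2 u x) :
    (hess u x).PosSemidef :=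
  .of_dotProduct_mulVec_nonneg (isHermitian_hess hu) fun ξ ↦ by
    simpa [fderiv_fderiv_apply hu] using
      fderiv_fderiv_nonneg_of_isLocalMin hmin hu (WithLp.toLp 2 ξ)

lemma hasFDerivAt_gradient (hu : ContDiffAt ℝ 2 u x) :
    HasFDerivAt (∇ u) (Matrix.toEuclideanCLM (𝕜 := ℝ) (hess u x)) x := by
  have h := (InnerProductSpace.toDual ℝ (Eucl n)).symm.toContinuousLinearEquiv.hasFDerivAt.comp x
    (differentiableAt_fderiv hu).hasFDerivAt
  refine h.congr_fderiv ?_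
  ext ξ : 1
  refine ext_inner_right ℝ fun ζ ↦ ?_
  calc ⟪(InnerProductSpace.toDual ℝ (Eucl n)).symm (fderiv ℝ (fderiv ℝ u) x ξ), ζ⟫
      = fderiv ℝ (fderiv ℝ u) x ζ ξ := by
        rw [InnerProductSpace.toDual_symm_apply]
        exact hu.isSymmSndFDerivAt (by simp) _ _
    _ = ⟪Matrix.toEuclideanCLM (𝕜 := ℝ) (hess u x) ξ, ζ⟫ := by
        rw [fderiv_fderiv_apply hu, real_inner_comm, Matrix.inner_toEuclideanCLM]

lemma hasFDerivAt_comp_norm_sub_sq {E : Type*} [NormedAddCommGroup E] [InnerProductSpace ℝ E]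
    {f : ℝ → ℝ} {f' : ℝ} {x y : E} (hf : HasDerivAt f f' (‖x - y‖ ^ 2)) :
    HasFDerivAt (fun z ↦ f (‖z - y‖ ^ 2)) ((2 * f') • innerSL ℝ (x - y)) x := by
  refine (hf.comp_hasFDerivAt x ((hasFDerivAt_id x).sub_const y).norm_sq).congr_fderiv ?_
  ext z
  simp; ring

lemma hess_comp_norm_sub_sq {f f' : ℝ → ℝ} {f'' : ℝ} {y : Eucl n}
    (hf : ∀ s, HasDerivAt f (f' s) s) (hf' : HasDerivAt f' f'' (‖x - y‖ ^ 2)) :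
    hess (fun z ↦ f (‖z - y‖ ^ 2)) x =
      (2 * f' (‖x - y‖ ^ 2)) • 1 + (4 * f'') • Matrix.vecMulVec (x - y).ofLp (x - y).ofLp := by
  ext i j
  have hpartial : (fun z ↦ fderiv ℝ (fun z ↦ f (‖z - y‖ ^ 2)) z (EuclideanSpace.single j 1)) =
      fun z ↦ 2 * f' (‖z - y‖ ^ 2) * (z j - y j) := by
    ext z
    rw [(hasFDerivAt_comp_norm_sub_sq (hf _)).fderiv]
    simp [EuclideanSpace.inner_single_right]
  have hcoord : HasFDerivAt (fun z : Eucl n ↦ z j - y j) (EuclideanSpace.proj (𝕜 := ℝ) j) x :=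
    (EuclideanSpace.proj (𝕜 := ℝ) j).hasFDerivAt.sub_const _
  have hprod := ((hasFDerivAt_comp_norm_sub_sq hf').const_mul 2).fun_mul hcoord
  simp only [hess, Matrix.of_apply, hpartial]
  rw [hprod.fderiv]
  by_cases h : i = j
  · subst h
    simp [EuclideanSpace.inner_single_right, Matrix.vecMulVec_apply]
    ring
  · simp [EuclideanSpace.inner_single_right, Matrix.vecMulVec_apply, h, Ne.symm h]
    ring

end Hessian

section Supersolutions

/-- The class of nonnegative `C²` functions on the open set `Ω` which at each point of `Ω` satisfy
`tr(A D²u) ≤ 0` for some `A` of ellipticity ratio `κ`. The matrix may depend on the point without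
any regularity, so the class is closed under rescaling and contains all nonnegative
supersolutions of the equations under consideration. -/
structure NonnegSupersolution {n : ℕ} (κ : ℝ) (Ω : Set (Eucl n)) (u : Eucl n → ℝ) : Prop where
  isOpen : IsOpen Ω
  contDiffOn : ContDiffOn ℝ 2 u Ω
  nonneg : ∀ x ∈ Ω, 0 ≤ u x
  exists_trace_nonpos : ∀ x ∈ Ω, ∃ A, EllipticRatio κ A ∧ (A * hess u x).trace ≤ 0

variable {n : ℕ} {κ : ℝ} {Ω : Set (Eucl n)} {u q : Eucl n → ℝ}

namespace NonnegSupersolution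

lemma contDiffAt (hu : NonnegSupersolution κ Ω u) {x : Eucl n} (hx : x ∈ Ω) :
    ContDiffAt ℝ 2 u x :=
  hu.contDiffOn.contDiffAt (hu.isOpen.mem_nhds hx)

lemma exists_trace_nonpos_of_isLocalMin_sub (hu : NonnegSupersolution κ Ω u) (hκ : 0 < κ)
    {x : Eucl n} (hx : x ∈ Ω) (hq : ContDiffAt ℝ 2 q x) (hmin : IsLocalMin (u - q) x) :
    ∃ A, EllipticRatio κ A ∧ (A * hess q x).trace ≤ 0 := by
  obtain ⟨A, hA, hAu⟩ := hu.exists_trace_nonpos x hx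
  have hpsd := posSemidef_hess_of_isLocalMin hmin ((hu.contDiffAt hx).sub hq)
  have hdiff : 0 ≤ (A * hess (u - q) x).trace := by
    refine nonneg_of_mul_nonneg_right (hA.trace_mul_trace_le hpsd |>.trans' ?_) hκ
    exact mul_nonneg hA.trace_pos.le hpsd.trace_nonneg
  rw [hess_sub (hu.contDiffAt hx) hq, Matrix.mul_sub, Matrix.trace_sub] at hdiff
  exact ⟨A, hA, by linarith⟩

lemma le_of_strict_subsolution (hu : NonnegSupersolution κ Ω u) (hκ : 0 < κ)
    {K U : Set (Eucl n)} (hK : IsCompact K) (hKΩ : K ⊆ Ω) (hU : IsOpen U) (hUK : U ⊆ K)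
    (hqK : ContinuousOn q K) (hqU : ContDiffOn ℝ 2 q U)
    (hstrict : ∀ x ∈ U, ∀ A, EllipticRatio κ A → 0 < (A * hess q x).trace)
    (hboundary : ∀ x ∈ K \ U, q x ≤ u x) : ∀ x ∈ K, q x ≤ u x := by
  intro x hx
  obtain ⟨p, hpK, hp⟩ := hK.exists_isMinOn ⟨x, hx⟩ ((hu.contDiffOn.continuousOn.mono hKΩ).sub hqK)
  have hpU : p ∉ U := fun hpU ↦ by
    have hmin : IsLocalMin (u - q) p := hp.isLocalMin (mem_of_superset (hU.mem_nhds hpU) hUK)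
    obtain ⟨A, hA, hAq⟩ := hu.exists_trace_nonpos_of_isLocalMin_sub hκ (hKΩ hpK)
      (hqU.contDiffAt (hU.mem_nhds hpU)) hmin
    exact hAq.not_gt (hstrict p hpU A hA)
  have hpx : u p - q p ≤ u x - q x := hp hx
  linarith [hboundary p ⟨hpK, hpU⟩]

end NonnegSupersolution

end Supersolutions

section Doubling

variable {n : ℕ} {κ : ℝ} {Ω : Set (Eucl n)} {u : Eucl n → ℝ}

/-- A Gaussian centred at `z`, shifted so that it vanishes on the sphere of radius `4r`, and
steep enough to be a strict subsolution outside `closedBall z r`. -/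
def gaussianBarrier (κ m r : ℝ) (z x : Eucl n) : ℝ :=
  m * (Real.exp (-(κ / r ^ 2) * ‖x - z‖ ^ 2) - Real.exp (-16 * κ))

/-- The fraction of a lower bound on `closedBall z r` that a supersolution on `closedBall z (4r)`
retains on `closedBall z (2r)`: the value of `gaussianBarrier κ 1 r z` at distance `2r`. -/
def doublingConst (κ : ℝ) : ℝ := Real.exp (-4 * κ) - Real.exp (-16 * κ)

lemma doublingConst_pos (hκ : 0 < κ) : 0 < doublingConst κ :=
  sub_pos.mpr (Real.exp_lt_exp.mpr (by linarith))

lemma doublingConst_le_one (hκ : 0 < κ) : doublingConst κ ≤ 1 := by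
  have := Real.exp_le_one_iff.mpr (show -4 * κ ≤ 0 by linarith)
  have := Real.exp_pos (-16 * κ)
  rw [doublingConst]
  linarith

lemma contDiff_gaussianBarrier (κ m r : ℝ) (z : Eucl n) :
    ContDiff ℝ 2 (gaussianBarrier κ m r z) := by
  have hsq : ContDiff ℝ 2 fun x : Eucl n ↦ ‖x - z‖ ^ 2 :=
    (contDiff_id.sub contDiff_const).norm_sq ℝ
  exact contDiff_const.mul (((contDiff_const.mul hsq).exp).sub contDiff_const)

lemma trace_mul_hess_gaussianBarrier (A : Matrix (Fin n) (Fin n) ℝ) (m r : ℝ) (z x : Eucl n) :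
    (A * hess (gaussianBarrier κ m r z) x).trace =
      2 * m * (κ / r ^ 2) * Real.exp (-(κ / r ^ 2) * ‖x - z‖ ^ 2) *
        (2 * (κ / r ^ 2) * ((x - z).ofLp ⬝ᵥ A *ᵥ (x - z).ofLp) - A.trace) := by
  set α := κ / r ^ 2
  have hexp (s : ℝ) : HasDerivAt (fun s ↦ Real.exp (-α * s)) (Real.exp (-α * s) * -α) s := by
    simpa using ((hasDerivAt_id s).const_mul (-α)).exp
  have hhess : hess (gaussianBarrier κ m r z) x = _ :=
    hess_comp_norm_sub_sq (fun s ↦ ((hexp s).sub_const (Real.exp (-16 * κ))).const_mul m)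
      (((hexp _).mul_const (-α)).const_mul m)
  rw [hhess, Matrix.mul_add, Matrix.trace_add, Matrix.mul_smul, Matrix.mul_smul, Matrix.mul_one,
    Matrix.mul_vecMulVec, Matrix.trace_smul, Matrix.trace_smul, Matrix.trace_vecMulVec,
    dotProduct_comm (A *ᵥ _), smul_eq_mul, smul_eq_mul]
  ring

lemma EllipticRatio.trace_mul_hess_gaussianBarrier_pos {A : Matrix (Fin n) (Fin n) ℝ}
    (hA : EllipticRatio κ A) (hκ : 0 < κ) {m r : ℝ} (hm : 0 < m) (hr : 0 < r) {x z : Eucl n}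
    (hx : r < ‖x - z‖) : 0 < (A * hess (gaussianBarrier κ m r z) x).trace := by
  have hquad : A.trace < 2 * (κ / r ^ 2) * ((x - z).ofLp ⬝ᵥ A *ᵥ (x - z).ofLp) := by
    have hnorm : (x - z).ofLp ⬝ᵥ (x - z).ofLp = ‖x - z‖ ^ 2 := by
      rw [EuclideanSpace.real_norm_sq_eq]
      simp [dotProduct, sq]
    have hratio := hA.trace_mul_le (x - z).ofLp
    rw [hnorm] at hratio
    calc A.trace < 2 / r ^ 2 * (A.trace * r ^ 2) := by
          field_simp
          linarith [hA.trace_pos]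
      _ ≤ 2 / r ^ 2 * (A.trace * ‖x - z‖ ^ 2) := by gcongr; exact hA.trace_pos.le
      _ ≤ 2 / r ^ 2 * (κ * ((x - z).ofLp ⬝ᵥ A *ᵥ (x - z).ofLp)) := by gcongr
      _ = _ := by ring
  rw [trace_mul_hess_gaussianBarrier]
  have := sub_pos.mpr hquad
  positivity

lemma gaussianBarrier_le (hκ : 0 ≤ κ) {m : ℝ} (hm : 0 ≤ m) (r : ℝ) (z x : Eucl n) :
    gaussianBarrier κ m r z x ≤ m := by
  have : Real.exp (-(κ / r ^ 2) * ‖x - z‖ ^ 2) ≤ 1 :=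
    Real.exp_le_one_iff.mpr (by rw [neg_mul, neg_nonpos]; positivity)
  have := Real.exp_pos (-16 * κ)
  exact mul_le_of_le_one_right hm (by linarith)

lemma gaussianBarrier_eq_zero {r : ℝ} (hr : r ≠ 0) (m : ℝ) {x z : Eucl n}
    (hx : ‖x - z‖ = 4 * r) : gaussianBarrier κ m r z x = 0 := by
  rw [gaussianBarrier, hx]
  field_simp
  norm_num

lemma mul_doublingConst_le_gaussianBarrier (hκ : 0 ≤ κ) {m r : ℝ} (hm : 0 ≤ m) (hr : 0 < r)
    {x z : Eucl n} (hx : ‖x - z‖ ≤ 2 * r) : m * doublingConst κ ≤ gaussianBarrier κ m r z x := by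
  have hexponent : -4 * κ ≤ -(κ / r ^ 2) * ‖x - z‖ ^ 2 := by
    calc -4 * κ = -(κ / r ^ 2) * (2 * r) ^ 2 := by field_simp; ring
      _ ≤ -(κ / r ^ 2) * ‖x - z‖ ^ 2 := by
        rw [neg_mul, neg_mul, neg_le_neg_iff]
        gcongr
  rw [gaussianBarrier, doublingConst]
  gcongr

lemma NonnegSupersolution.doubling (hu : NonnegSupersolution κ Ω u) (hκ : 0 < κ) {z : Eucl n}
    {r m : ℝ} (hr : 0 < r) (hm : 0 < m) (hball : closedBall z (4 * r) ⊆ Ω)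
    (hlower : ∀ y ∈ closedBall z r, m ≤ u y) :
    ∀ y ∈ closedBall z (2 * r), m * doublingConst κ ≤ u y := by
  have hsmooth := contDiff_gaussianBarrier κ m r z
  have hbarrier : ∀ y ∈ closedBall z (4 * r), gaussianBarrier κ m r z y ≤ u y := by
    refine hu.le_of_strict_subsolution hκ (U := ball z (4 * r) \ closedBall z r)
      (isCompact_closedBall _ _) hball (isOpen_ball.sdiff isClosed_closedBall)
      (Set.sdiff_subset.trans ball_subset_closedBall) hsmooth.continuous.continuousOn
      hsmooth.contDiffOn (fun x hx A hA ↦ ?_) fun x hx ↦ ?_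
    · exact hA.trace_mul_hess_gaussianBarrier_pos hκ hm hr
        (not_le.mp (mt mem_closedBall_iff_norm.mpr hx.2))
    · by_cases hxr : x ∈ closedBall z r
      · exact (gaussianBarrier_le hκ.le hm.le r z x).trans (hlower x hxr)
      · have hsphere : ‖x - z‖ = 4 * r := by
          refine le_antisymm (mem_closedBall_iff_norm.mp hx.1) (not_lt.mp fun hlt ↦ ?_)
          exact hx.2 ⟨mem_ball_iff_norm.mpr hlt, hxr⟩
        exact (gaussianBarrier_eq_zero hr.ne' m hsphere).trans_le (hu.nonneg x (hball hx.1))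
  exact fun y hy ↦ (mul_doublingConst_le_gaussianBarrier hκ.le hm.le hr
    (mem_closedBall_iff_norm.mp hy)).trans
    (hbarrier y (closedBall_subset_closedBall (by linarith) hy))

end Doubling

section Contact

/-- The concave paraboloid of opening `a` and vertex `y`, normalised to vanish at its vertex. A
vertical translate of it touches `u` from below at `x` when `u - paraboloid a y` has a local minimum
at `x`. -/
def paraboloid {E : Type*} [NormedAddCommGroup E] (a : ℝ) (y x : E) : ℝ :=
  -(a / 2) * ‖x - y‖ ^ 2

lemma exists_paraboloid_contact {E : Type*} [NormedAddCommGroup E] [ProperSpace E] {u : E → ℝ}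
    {x₀ y : E} {ρ t : ℝ} (hcont : ContinuousOn u (closedBall x₀ ρ))
    (hnonneg : ∀ x ∈ closedBall x₀ ρ, 0 ≤ u x) (hlow : u x₀ < t / 2) (hy : y ∈ ball x₀ (ρ / 4)) :
    ∃ p ∈ ball x₀ ρ, u p < t ∧ IsLocalMin (u - paraboloid (2 * t / ρ ^ 2) y) p := by
  have hdist : ‖x₀ - y‖ < ρ / 4 := by rwa [← dist_eq_norm, dist_comm]
  have hρ : 0 < ρ := by linarith [norm_nonneg (x₀ - y)]
  have hx₀ : x₀ ∈ closedBall x₀ ρ := mem_closedBall_self hρ.le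
  have ht : 0 < t := by linarith [hnonneg x₀ hx₀]
  have hpar (x : E) : paraboloid (2 * t / ρ ^ 2) y x = -(t / ρ ^ 2 * ‖x - y‖ ^ 2) := by
    rw [paraboloid]; ring
  have hpar_cont : Continuous (paraboloid (2 * t / ρ ^ 2) y) :=
    continuous_const.mul ((continuous_id.sub continuous_const).norm.pow 2)
  obtain ⟨p, hp, hpmin⟩ := (isCompact_closedBall x₀ ρ).exists_isMinOn ⟨x₀, hx₀⟩
    (hcont.sub hpar_cont.continuousOn)
  have hcentre : t / ρ ^ 2 * ‖x₀ - y‖ ^ 2 ≤ t / 16 := by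
    calc t / ρ ^ 2 * ‖x₀ - y‖ ^ 2 ≤ t / ρ ^ 2 * (ρ / 4) ^ 2 := by gcongr
      _ = t / 16 := by field_simp; norm_num
  have hvalue : u p + t / ρ ^ 2 * ‖p - y‖ ^ 2 < 9 * t / 16 := by
    have : u p - paraboloid (2 * t / ρ ^ 2) y p ≤ u x₀ - paraboloid (2 * t / ρ ^ 2) y x₀ :=
      hpmin hx₀
    rw [hpar, hpar] at this
    linarith
  have hint : p ∈ ball x₀ ρ := by
    by_contra hsphere
    have hfar : 3 * ρ / 4 ≤ ‖p - y‖ := by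
      have := norm_sub_le_norm_sub_add_norm_sub p y x₀
      rw [mem_ball_iff_norm, not_lt] at hsphere
      rw [norm_sub_rev y] at this
      linarith
    have : 9 * t / 16 ≤ t / ρ ^ 2 * ‖p - y‖ ^ 2 := by
      calc 9 * t / 16 = t / ρ ^ 2 * (3 * ρ / 4) ^ 2 := by field_simp; norm_num
        _ ≤ t / ρ ^ 2 * ‖p - y‖ ^ 2 := by gcongr
    linarith [hnonneg p hp]
  have hpos : 0 ≤ t / ρ ^ 2 * ‖p - y‖ ^ 2 := by positivity
  exact ⟨p, hint, by linarith,
    hpmin.isLocalMin (mem_of_superset (isOpen_ball.mem_nhds hint) ball_subset_closedBall)⟩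

variable {n : ℕ} {κ a : ℝ} {Ω : Set (Eucl n)} {u : Eucl n → ℝ} {x y : Eucl n}

lemma hasFDerivAt_paraboloid (a : ℝ) (y x : Eucl n) :
    HasFDerivAt (paraboloid a y) (-a • innerSL ℝ (x - y)) x := by
  refine (hasFDerivAt_comp_norm_sub_sq ((hasDerivAt_id _).const_mul (-(a / 2)))).congr_fderiv ?_
  congr 1
  ring

lemma contDiff_paraboloid (a : ℝ) (y : Eucl n) : ContDiff ℝ 2 (paraboloid a y) :=
  contDiff_const.mul ((contDiff_id.sub contDiff_const).norm_sq ℝ)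

lemma hess_paraboloid (a : ℝ) (y x : Eucl n) : hess (paraboloid a y) x = -a • 1 := by
  have hlinear (s : ℝ) : HasDerivAt (fun s ↦ -(a / 2) * s) (-(a / 2)) s := by
    simpa using (hasDerivAt_id s).const_mul (-(a / 2))
  have h : hess (paraboloid a y) x = _ :=
    hess_comp_norm_sub_sq hlinear (hasDerivAt_const _ (-(a / 2)))
  rw [h, mul_zero, zero_smul, add_zero]
  congr 1
  ring

/-- The vertex of the paraboloid of opening `a` that can touch `u` from below at `x`: the map whose
Jacobian is estimated in the Aleksandrov–Bakelman–Pucci argument. -/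
def contactVertex (a : ℝ) (u : Eucl n → ℝ) (x : Eucl n) : Eucl n :=
  x + a⁻¹ • ∇ u x

lemma contactVertex_eq_of_isLocalMin (ha : a ≠ 0) (hu : DifferentiableAt ℝ u x)
    (hmin : IsLocalMin (u - paraboloid a y) x) : contactVertex a u x = y := by
  have hzero := hmin.hasFDerivAt_eq_zero (hu.hasFDerivAt.sub (hasFDerivAt_paraboloid a y x))
  have hgrad : HasGradientAt u (-a • (x - y)) x := by
    rw [hasGradientAt_iff_hasFDerivAt]
    refine hu.hasFDerivAt.congr_fderiv ((sub_eq_zero.mp hzero).trans ?_)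
    ext z
    simp
  rw [contactVertex, hgrad.gradient, smul_smul, mul_neg, inv_mul_cancel₀ ha]
  module

lemma hasFDerivAt_contactVertex (a : ℝ) (hu : ContDiffAt ℝ 2 u x) :
    HasFDerivAt (contactVertex a u) (Matrix.toEuclideanCLM (𝕜 := ℝ) (1 + a⁻¹ • hess u x)) x := by
  refine ((hasFDerivAt_id x).add ((hasFDerivAt_gradient hu).const_smul a⁻¹)).congr_fderiv ?_
  rw [map_add, map_one, map_smul, ContinuousLinearMap.one_def]

lemma det_fderiv_contactVertex (a : ℝ) (hu : ContDiffAt ℝ 2 u x) :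
    (fderiv ℝ (contactVertex a u) x).det = (1 + a⁻¹ • hess u x).det := by
  rw [(hasFDerivAt_contactVertex a hu).fderiv, ContinuousLinearMap.det,
    Matrix.coe_toEuclideanCLM_eq_toEuclideanLin, LinearMap.det_toLpLin]

lemma posSemidef_one_add_smul_hess_of_isLocalMin (ha : 0 < a) (hu : ContDiffAt ℝ 2 u x)
    (hmin : IsLocalMin (u - paraboloid a y) x) : (1 + a⁻¹ • hess u x).PosSemidef := by
  have hpar := (contDiff_paraboloid a y).contDiffAt (x := x)
  have h := (posSemidef_hess_of_isLocalMin hmin (hu.sub hpar)).smul (inv_nonneg.mpr ha.le)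
  rwa [hess_sub hu hpar, hess_paraboloid, smul_sub, neg_smul, smul_neg, sub_neg_eq_add,
    inv_smul_smul₀ ha.ne', add_comm] at h

namespace NonnegSupersolution

lemma trace_one_add_smul_hess_le (hu : NonnegSupersolution κ Ω u) (hκ : 0 < κ) (ha : 0 ≤ a)
    (hx : x ∈ Ω) (hP : (1 + a • hess u x).PosSemidef) : (1 + a • hess u x).trace ≤ κ := by
  obtain ⟨A, hA, hAu⟩ := hu.exists_trace_nonpos x hx
  refine le_of_mul_le_mul_left ?_ hA.trace_pos
  calc A.trace * (1 + a • hess u x).trace ≤ κ * (A * (1 + a • hess u x)).trace :=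
        hA.trace_mul_trace_le hP
    _ = κ * (A.trace + a * (A * hess u x).trace) := by simp [Matrix.mul_add]
    _ ≤ κ * A.trace := by
        have := mul_nonpos_of_nonneg_of_nonpos ha hAu
        gcongr
        linarith
    _ = A.trace * κ := mul_comm _ _

lemma abs_det_fderiv_contactVertex_le (hu : NonnegSupersolution κ Ω u) (hκ : 0 < κ) (ha : 0 < a)
    (hx : x ∈ Ω) (hmin : IsLocalMin (u - paraboloid a y) x) :
    |(fderiv ℝ (contactVertex a u) x).det| ≤ κ ^ n := by
  have hP := posSemidef_one_add_smul_hess_of_isLocalMin ha (hu.contDiffAt hx) hmin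
  rw [det_fderiv_contactVertex a (hu.contDiffAt hx), abs_of_nonneg hP.det_nonneg]
  calc (1 + a⁻¹ • hess u x).det ≤ (1 + a⁻¹ • hess u x).trace ^ n := by
        simpa using det_le_trace_pow_card hP
    _ ≤ κ ^ n := by
        gcongr
        · exact hP.trace_nonneg
        · exact hu.trace_one_add_smul_hess_le hκ (inv_nonneg.mpr ha.le) hx hP

end NonnegSupersolution

end Contact

section PointToMeasure

lemma addHaar_image_abs_det_le {E : Type*} [NormedAddCommGroup E] [NormedSpace ℝ E]
    [FiniteDimensional ℝ E] [MeasurableSpace E] [BorelSpace E] (μ : Measure E) [μ.IsAddHaarMeasure]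
    {f : E → E} {D : Set E} (hD : MeasurableSet D) (hf : ∀ x ∈ D, DifferentiableAt ℝ f x) (C : ℝ) :
    μ (f '' (D ∩ {x | |(fderiv ℝ f x).det| ≤ C})) ≤ ENNReal.ofReal C * μ D := by
  set S := D ∩ {x | |(fderiv ℝ f x).det| ≤ C}
  have hdet : Measurable fun x ↦ |(fderiv ℝ f x).det| :=
    ContinuousLinearMap.continuous_det.abs.measurable.comp (measurable_fderiv ℝ f)
  have hS : MeasurableSet S := hD.inter (measurableSet_le hdet measurable_const)
  calc μ (f '' S) ≤ ∫⁻ x in S, ENNReal.ofReal |(fderiv ℝ f x).det| ∂μ :=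
        addHaar_image_le_lintegral_abs_det_fderiv μ hS fun x hx ↦
          (hf x hx.1).hasFDerivAt.hasFDerivWithinAt
    _ ≤ ∫⁻ _ in S, ENNReal.ofReal C ∂μ :=
        setLIntegral_mono measurable_const fun x hx ↦ ENNReal.ofReal_le_ofReal hx.2
    _ ≤ ENNReal.ofReal C * μ D := by
        rw [setLIntegral_const]
        gcongr
        exact Set.inter_subset_left

/-- The fraction of `t` that bounds a supersolution from below on `closedBall x (2ρ)` once its
sublevel set `{u < t}` has small density in `closedBall x ρ`: half of `t` survives on a smaller
concentric ball, which is then doubled twice. -/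
def spreadConst (κ : ℝ) : ℝ := doublingConst κ ^ 2 / 2

variable {n : ℕ} {κ : ℝ} {Ω : Set (Eucl n)} {u : Eucl n → ℝ}

namespace NonnegSupersolution

lemma volume_ball_le_volume_sublevel (hu : NonnegSupersolution κ Ω u) (hκ : 0 < κ) {x₀ : Eucl n}
    {ρ t : ℝ} (hρ : 0 < ρ) (hball : closedBall x₀ ρ ⊆ Ω) (hlow : u x₀ < t / 2) :
    volume (ball x₀ (ρ / 4)) ≤
      ENNReal.ofReal (κ ^ n) * volume ({y ∈ Ω | u y < t} ∩ closedBall x₀ ρ) := by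
  have ht : 0 < t := by linarith [hu.nonneg x₀ (hball (mem_closedBall_self hρ.le))]
  set T := contactVertex (2 * t / ρ ^ 2) u
  set D := {y ∈ ball x₀ ρ | u y < t}
  have hcont := hu.contDiffOn.continuousOn.mono hball
  have hDball : D ⊆ closedBall x₀ ρ := fun y hy ↦ ball_subset_closedBall hy.1
  have hD : MeasurableSet D :=
    ((hcont.mono ball_subset_closedBall).isOpen_inter_preimage isOpen_ball
      (isOpen_Iio (a := t))).measurableSet
  have hcover : ball x₀ (ρ / 4) ⊆ T '' (D ∩ {x | |(fderiv ℝ T x).det| ≤ κ ^ n}) := by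
    intro y hy
    obtain ⟨p, hp, hpt, hmin⟩ := exists_paraboloid_contact hcont
      (fun x hx ↦ hu.nonneg x (hball hx)) hlow hy
    have hpΩ : p ∈ Ω := hball (ball_subset_closedBall hp)
    have ha : 0 < 2 * t / ρ ^ 2 := by positivity
    exact ⟨p, ⟨⟨hp, hpt⟩, hu.abs_det_fderiv_contactVertex_le hκ ha hpΩ hmin⟩,
      contactVertex_eq_of_isLocalMin ha.ne' ((hu.contDiffAt hpΩ).differentiableAt (by simp)) hmin⟩
  calc volume (ball x₀ (ρ / 4))
      ≤ volume (T '' (D ∩ {x | |(fderiv ℝ T x).det| ≤ κ ^ n})) := measure_mono hcover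
    _ ≤ ENNReal.ofReal (κ ^ n) * volume D :=
        addHaar_image_abs_det_le volume hD (fun x hx ↦ (hasFDerivAt_contactVertex _
          (hu.contDiffAt (hball (hDball hx)))).differentiableAt) _
    _ ≤ ENNReal.ofReal (κ ^ n) * volume ({y ∈ Ω | u y < t} ∩ closedBall x₀ ρ) := by
        gcongr
        exact fun y hy ↦ ⟨⟨hball (hDball hy), hy.2⟩, hDball hy⟩

lemma le_of_volume_sublevel_lt (hu : NonnegSupersolution κ Ω u) (hκ : 0 < κ) {x : Eucl n}
    {ρ t : ℝ} (hρ : 0 < ρ) (ht : 0 < t) (hball : closedBall x (4 * ρ) ⊆ Ω)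
    (hsmall : ENNReal.ofReal ((8 * κ) ^ n) * volume ({y ∈ Ω | u y < t} ∩ closedBall x ρ) <
      volume (closedBall x ρ)) :
    ∀ y ∈ closedBall x (2 * ρ), spreadConst κ * t ≤ u y := by
  have hhalf : ∀ y ∈ closedBall x (ρ / 2), t / 2 ≤ u y := by
    intro y hy
    by_contra! hlow
    have hsub : closedBall y (ρ / 2) ⊆ closedBall x ρ :=
      closedBall_subset_closedBall' (by linarith [mem_closedBall.mp hy])
    have hsubΩ := hsub.trans ((closedBall_subset_closedBall (by linarith)).trans hball)
    refine hsmall.not_ge ?_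
    calc volume (closedBall x ρ) = ENNReal.ofReal (8 ^ n) * volume (ball y (ρ / 2 / 4)) := by
          rw [Measure.addHaar_closedBall _ _ hρ.le, Measure.addHaar_ball_of_pos _ y (by linarith),
            ← mul_assoc, ← ENNReal.ofReal_mul (by positivity), finrank_euclideanSpace_fin,
            ← mul_pow]
          ring_nf
      _ ≤ ENNReal.ofReal (8 ^ n) *
            (ENNReal.ofReal (κ ^ n) * volume ({z ∈ Ω | u z < t} ∩ closedBall y (ρ / 2))) := by
          gcongr
          exact hu.volume_ball_le_volume_sublevel hκ (by linarith) hsubΩ hlow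
      _ = ENNReal.ofReal ((8 * κ) ^ n) * volume ({z ∈ Ω | u z < t} ∩ closedBall y (ρ / 2)) := by
          rw [← mul_assoc, ← ENNReal.ofReal_mul (by positivity), ← mul_pow]
      _ ≤ ENNReal.ofReal ((8 * κ) ^ n) * volume ({z ∈ Ω | u z < t} ∩ closedBall x ρ) := by
          gcongr
  have hfirst := hu.doubling hκ (by linarith) (by linarith)
    ((closedBall_subset_closedBall (by linarith)).trans hball) hhalf
  have hsecond := hu.doubling hκ (z := x) (r := ρ) hρ
    (mul_pos (half_pos ht) (doublingConst_pos hκ)) hball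
    (fun y hy ↦ hfirst y (by convert hy using 2; ring))
  refine fun y hy ↦ le_trans (le_of_eq ?_) (hsecond y hy)
  rw [spreadConst]
  ring

end NonnegSupersolution

end PointToMeasure

section Covering

lemma exists_stopping_radius {P : ℝ → Prop} {r : ℝ} (hr : 0 < r) (hstart : ¬P r)
    (hsmall : ∀ᶠ ρ in 𝓝[>] 0, P ρ) : ∃ R, 0 < R ∧ R ≤ r ∧ ¬P R ∧ P (R / 2) := by
  by_contra! hstep
  have hnot (j : ℕ) : ¬P (r * (1 / 2) ^ j) := by
    induction j with
    | zero => simpa using hstart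
    | succ j ih =>
      have hle : r * (1 / 2) ^ j ≤ r :=
        mul_le_of_le_one_right hr.le (pow_le_one₀ (by norm_num) (by norm_num))
      convert hstep _ (by positivity) hle ih using 2
      ring
  have htend : Tendsto (fun j : ℕ ↦ r * (1 / 2 : ℝ) ^ j) atTop (𝓝[>] 0) := by
    refine tendsto_nhdsWithin_iff.mpr ⟨?_, .of_forall fun j ↦ Set.mem_Ioi.mpr (by positivity)⟩
    simpa using (tendsto_pow_atTop_nhds_zero_of_lt_one (r := (1 / 2 : ℝ)) (by norm_num)
      (by norm_num)).const_mul r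
  obtain ⟨j, hj⟩ := (htend.eventually hsmall).exists
  exact hnot j hj

variable {E : Type*} [NormedAddCommGroup E] [NormedSpace ℝ E] [FiniteDimensional ℝ E]
  [MeasurableSpace E] [BorelSpace E] (μ : Measure E)

lemma ae_eventually_mul_measure_inter_closedBall_lt [IsLocallyFiniteMeasure μ] [μ.IsOpenPosMeasure]
    {S : Set E} (hS : MeasurableSet S) {C : ℝ≥0∞} (hC : C ≠ ⊤) :
    ∀ᵐ x ∂μ, x ∉ S → ∀ᶠ ρ in 𝓝[>] 0, C * μ (S ∩ closedBall x ρ) < μ (closedBall x ρ) := by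
  filter_upwards [Besicovitch.ae_tendsto_measure_inter_div_of_measurableSet μ hS] with x hx hxS
  have hdensity : Tendsto (fun ρ ↦ C * (μ (S ∩ closedBall x ρ) / μ (closedBall x ρ))) (𝓝[>] 0)
      (𝓝 0) := by
    simpa [hxS] using ENNReal.Tendsto.const_mul hx (Or.inr hC)
  filter_upwards [hdensity.eventually_lt_const one_pos, self_mem_nhdsWithin] with ρ hlt hρ
  rwa [← mul_div_assoc, ENNReal.div_lt_iff (Or.inl (measure_closedBall_pos μ x hρ).ne')
    (Or.inl measure_closedBall_lt_top.ne), one_mul] at hlt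

lemma measure_le_of_ae_exists_closedBall [μ.IsAddHaarMeasure] {G D : Set E}
    (hD : MeasurableSet D) {C : ℝ≥0∞} {r : ℝ}
    (hG : ∀ᵐ x ∂μ, x ∈ G → ∃ R, 0 < R ∧ R ≤ r ∧ μ (closedBall x R) ≤ C * μ (D ∩ closedBall x R)) :
    μ G ≤ ENNReal.ofReal (5 ^ Module.finrank ℝ E) * C * μ D := by
  set G' := {x | ∃ R, 0 < R ∧ R ≤ r ∧ μ (closedBall x R) ≤ C * μ (D ∩ closedBall x R)}
  choose! R hRpos hRle hRmeas using fun x (hx : x ∈ G') ↦ hx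
  obtain ⟨v, hvG, hvdisj, hvcover⟩ :=
    Vitali.exists_disjoint_subfamily_covering_enlargement_closedBall G' id R r hRle 5 (by norm_num)
  have hvcount : v.Countable := hvdisj.countable_of_nonempty_interior fun b hb ↦
    ⟨b, ball_subset_interior_closedBall (mem_ball_self (hRpos b (hvG hb)))⟩
  have hdisj : v.PairwiseDisjoint fun b ↦ D ∩ closedBall b (R b) :=
    hvdisj.mono fun b ↦ Set.inter_subset_right
  have hcover : G' ⊆ ⋃ b ∈ v, closedBall b (5 * R b) := fun x hx ↦ by
    obtain ⟨b, hb, hsub⟩ := hvcover x hx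
    exact Set.mem_biUnion hb (hsub (mem_closedBall_self (hRpos x hx).le))
  have henlarge (b : v) : μ (closedBall b (5 * R b)) ≤
      ENNReal.ofReal (5 ^ Module.finrank ℝ E) * C * μ (D ∩ closedBall b (R b)) := by
    rw [Measure.addHaar_closedBall_mul_of_pos _ _ (by norm_num),
      ← Measure.addHaar_closedBall_center μ (b : E), mul_assoc]
    gcongr
    exact hRmeas b (hvG b.2)
  calc μ G ≤ μ G' := measure_mono_ae hG
    _ ≤ μ (⋃ b ∈ v, closedBall b (5 * R b)) := measure_mono hcover
    _ ≤ ∑' b : v, μ (closedBall b (5 * R b)) := measure_biUnion_le μ hvcount _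
    _ ≤ ∑' b : v, ENNReal.ofReal (5 ^ Module.finrank ℝ E) * C * μ (D ∩ closedBall b (R b)) :=
        ENNReal.tsum_le_tsum henlarge
    _ = ENNReal.ofReal (5 ^ Module.finrank ℝ E) * C * μ (⋃ b ∈ v, D ∩ closedBall b (R b)) := by
        rw [ENNReal.tsum_mul_left,
          measure_biUnion hvcount hdisj fun b _ ↦ hD.inter measurableSet_closedBall]
    _ ≤ ENNReal.ofReal (5 ^ Module.finrank ℝ E) * C * μ D := by
        gcongr
        exact Set.iUnion₂_subset fun b _ ↦ Set.inter_subset_left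

lemma exists_measure_ball_sdiff_ball_lt [μ.IsAddHaarMeasure] {ρ : ℝ} (hρ : ρ < 1) {ε : ℝ≥0∞}
    (hε : 0 < ε) : ∃ R ∈ Set.Ioo ρ 1, μ (ball 0 1 \ ball 0 R) < ε := by
  have hshell {R : ℝ} (hR : R ∈ Set.Ioo (max ρ 0) 1) : μ (ball 0 1 \ ball 0 R) =
      ENNReal.ofReal (1 - R ^ Module.finrank ℝ E) * μ (ball 0 1) := by
    have hRpos : 0 < R := (le_max_right _ _).trans_lt hR.1
    rw [measure_sdiff (ball_subset_ball hR.2.le) measurableSet_ball.nullMeasurableSet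
      measure_ball_lt_top.ne, Measure.addHaar_ball_of_pos μ 0 hRpos,
      ENNReal.ofReal_sub _ (by positivity), ENNReal.sub_mul fun _ _ ↦ measure_ball_lt_top.ne]
    simp
  have htend : Tendsto (fun R : ℝ ↦ ENNReal.ofReal (1 - R ^ Module.finrank ℝ E) * μ (ball 0 1))
      (𝓝[<] 1) (𝓝 0) := by
    have hreal : Tendsto (fun R : ℝ ↦ 1 - R ^ Module.finrank ℝ E) (𝓝[<] 1) (𝓝 0) := by
      have : Continuous fun R : ℝ ↦ 1 - R ^ Module.finrank ℝ E := by fun_prop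
      simpa using (this.tendsto 1).mono_left nhdsWithin_le_nhds
    simpa using ENNReal.Tendsto.mul_const (ENNReal.tendsto_ofReal hreal)
      (Or.inr measure_ball_lt_top.ne)
  obtain ⟨R, hlt, hR⟩ := ((htend.eventually_lt_const hε).and
    (Ioo_mem_nhdsLT (max_lt hρ one_pos))).exists
  exact ⟨R, ⟨(le_max_left _ _).trans_lt hR.1, hR.2⟩, (hshell hR).trans_lt hlt⟩

end Covering

section Growth

variable {n : ℕ} {κ : ℝ} {Ω : Set (Eucl n)} {u : Eucl n → ℝ}

lemma spreadConst_pos (hκ : 0 < κ) : 0 < spreadConst κ :=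
  half_pos (pow_pos (doublingConst_pos hκ) 2)

lemma spreadConst_le_one (hκ : 0 < κ) : spreadConst κ ≤ 1 := by
  have := pow_le_one₀ (n := 2) (doublingConst_pos hκ).le (doublingConst_le_one hκ)
  rw [spreadConst]
  linarith

namespace NonnegSupersolution

lemma isOpen_sublevel (hu : NonnegSupersolution κ Ω u) (t : ℝ) : IsOpen {y ∈ Ω | u y < t} :=
  hu.contDiffOn.continuousOn.isOpen_inter_preimage hu.isOpen isOpen_Iio

lemma measurableSet_layer (hu : NonnegSupersolution κ Ω u) (s t : ℝ) :
    MeasurableSet {y ∈ Ω | s ≤ u y ∧ u y < t} := by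
  convert MeasurableSet.diff (hu.isOpen_sublevel t).measurableSet
    (hu.isOpen_sublevel s).measurableSet using 1
  ext y
  simp only [Set.mem_ofPred_eq, Set.mem_sdiff]
  grind

lemma volume_le_volume_layer (hu : NonnegSupersolution κ Ω u) (hκ : 0 < κ) {r t : ℝ} (hr : 0 < r)
    (ht : 0 < t) {G : Set (Eucl n)}
    (hG : ∀ x ∈ G, closedBall x (4 * r) ⊆ Ω ∧ t ≤ u x ∧ volume (closedBall x r) ≤
      ENNReal.ofReal ((8 * κ) ^ n) * volume ({y ∈ Ω | u y < t} ∩ closedBall x r)) :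
    volume G ≤ ENNReal.ofReal (5 ^ n) * ENNReal.ofReal ((8 * κ) ^ n) *
      volume {y ∈ Ω | spreadConst κ * t ≤ u y ∧ u y < t} := by
  have hdensity := ae_eventually_mul_measure_inter_closedBall_lt volume
    (hu.isOpen_sublevel t).measurableSet (ENNReal.ofReal_ne_top (r := (8 * κ) ^ n))
  rw [show (5 : ℝ) ^ n = 5 ^ Module.finrank ℝ (Eucl n) by rw [finrank_euclideanSpace_fin]]
  refine measure_le_of_ae_exists_closedBall volume (r := r)
    (hu.measurableSet_layer (spreadConst κ * t) t) ?_
  filter_upwards [hdensity] with x hx hxG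
  obtain ⟨hball, hxt, hstart⟩ := hG x hxG
  obtain ⟨R, hR, hRr, hlarge, hsmall⟩ := exists_stopping_radius hr hstart.not_gt
    (hx fun hlt ↦ hxt.not_gt hlt.2)
  have hspread : ∀ y ∈ closedBall x R, spreadConst κ * t ≤ u y := by
    convert hu.le_of_volume_sublevel_lt hκ (half_pos hR) ht
      ((closedBall_subset_closedBall (by linarith)).trans hball) hsmall using 4
    ring
  have hlayer : {y ∈ Ω | u y < t} ∩ closedBall x R ⊆
      {y ∈ Ω | spreadConst κ * t ≤ u y ∧ u y < t} ∩ closedBall x R :=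
    fun y hy ↦ ⟨⟨hy.1.1, hspread y hy.2, hy.1.2⟩, hy.2⟩
  exact ⟨R, hR, hRr, (not_lt.mp hlarge).trans (mul_le_mul_right (measure_mono hlayer) _)⟩

lemma nat_mul_volume_le (hu : NonnegSupersolution κ Ω u) (hκ : 0 < κ) {r : ℝ} (hr : 0 < r)
    {G : Set (Eucl n)} (hGΩ : ∀ x ∈ G, closedBall x (4 * r) ⊆ Ω) (hG1 : ∀ x ∈ G, 1 ≤ u x) {K : ℕ}
    (hlow : ∀ x ∈ G, ∃ y ∈ closedBall x (2 * r), u y < spreadConst κ ^ K) :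
    K * volume G ≤ ENNReal.ofReal (5 ^ n) * ENNReal.ofReal ((8 * κ) ^ n) * volume Ω := by
  set γ := spreadConst κ
  have hγ : 0 < γ := spreadConst_pos hκ
  have hγ1 : γ ≤ 1 := spreadConst_le_one hκ
  set layer : ℕ → Set (Eucl n) := fun k ↦ {y ∈ Ω | γ * γ ^ k ≤ u y ∧ u y < γ ^ k}
  have hlayer {k : ℕ} (hk : k ∈ Finset.range K) :
      volume G ≤ ENNReal.ofReal (5 ^ n) * ENNReal.ofReal ((8 * κ) ^ n) * volume (layer k) := by
    refine hu.volume_le_volume_layer hκ hr (pow_pos hγ k) fun x hx ↦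
      ⟨hGΩ x hx, (pow_le_one₀ hγ.le hγ1).trans (hG1 x hx), ?_⟩
    by_contra! hsmall
    obtain ⟨y, hy, hyK⟩ := hlow x hx
    have := hu.le_of_volume_sublevel_lt hκ hr (pow_pos hγ k) (hGΩ x hx) hsmall y hy
    have : γ ^ K ≤ γ * γ ^ k := by
      rw [← pow_succ']
      exact pow_le_pow_of_le_one hγ.le hγ1 (Finset.mem_range.mp hk)
    linarith
  have hdisj : Pairwise (Function.onFun Disjoint layer) := by
    have hanti : Antitone fun k ↦ γ ^ k := pow_right_anti₀ hγ.le hγ1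
    refine fun j k hjk ↦ (hanti.pairwise_disjoint_on_Ico_succ hjk).preimage u |>.mono ?_ ?_ <;>
      exact fun y hy ↦ by simpa [pow_succ'] using hy.2
  calc K * volume G = ∑ _k ∈ Finset.range K, volume G := by simp
    _ ≤ ∑ k ∈ Finset.range K,
          ENNReal.ofReal (5 ^ n) * ENNReal.ofReal ((8 * κ) ^ n) * volume (layer k) :=
        Finset.sum_le_sum fun k hk ↦ hlayer hk
    _ = ENNReal.ofReal (5 ^ n) * ENNReal.ofReal ((8 * κ) ^ n) *
          volume (⋃ k ∈ Finset.range K, layer k) := by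
        rw [← Finset.mul_sum, measure_biUnion_finset (hdisj.set_pairwise _)
          fun k _ ↦ hu.measurableSet_layer _ _]
    _ ≤ ENNReal.ofReal (5 ^ n) * ENNReal.ofReal ((8 * κ) ^ n) * volume Ω := by
        gcongr
        exact Set.iUnion₂_subset fun k _ y hy ↦ hy.1

lemma exists_le_on_closedBall (hu : NonnegSupersolution κ Ω u) (hκ : 0 < κ) {r : ℝ} (hr : 0 < r)
    {G : Set (Eucl n)} (hGΩ : ∀ x ∈ G, closedBall x (4 * r) ⊆ Ω) (hG1 : ∀ x ∈ G, 1 ≤ u x) {K : ℕ}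
    (hK : ENNReal.ofReal (5 ^ n) * ENNReal.ofReal ((8 * κ) ^ n) * volume Ω < K * volume G) :
    ∃ x ∈ G, ∀ y ∈ closedBall x (2 * r), spreadConst κ ^ K ≤ u y := by
  by_contra! hlow
  exact hK.not_ge (hu.nat_mul_volume_le hκ hr hGΩ hG1 hlow)

end NonnegSupersolution

end Growth

section Propagation

variable {n : ℕ} {κ : ℝ} {Ω : Set (Eucl n)} {u : Eucl n → ℝ}

namespace NonnegSupersolution

lemma mul_doublingConst_pow_le (hu : NonnegSupersolution κ Ω u) (hκ : 0 < κ) {K : Set (Eucl n)}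
    (hKconv : Convex ℝ K) {r : ℝ} (hr : 0 < r) (hKΩ : ∀ x ∈ K, closedBall x (4 * r) ⊆ Ω) (N : ℕ)
    {x y : Eucl n} (hx : x ∈ K) (hy : y ∈ K) (hdist : dist x y ≤ N * r) {m : ℝ} (hm : 0 < m)
    (hlower : ∀ z ∈ closedBall x r, m ≤ u z) : m * doublingConst κ ^ N ≤ u y := by
  induction N generalizing x m with
  | zero =>
    have hxy : y ∈ closedBall x r := by
      rw [mem_closedBall']
      refine hdist.trans ?_
      simpa using hr.le
    simpa using hlower y hxy
  | succ N ih =>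
    set θ : ℝ := 1 / (N + 1)
    have hθ0 : 0 ≤ θ := by positivity
    have hθ1 : θ ≤ 1 := div_le_one_of_le₀ (by linarith [Nat.cast_nonneg (α := ℝ) N]) (by positivity)
    have hstep : dist (AffineMap.lineMap x y θ) x ≤ r := by
      rw [dist_lineMap_left, Real.norm_of_nonneg hθ0]
      calc θ * dist x y ≤ θ * ((N + 1 : ℕ) * r) := by gcongr
        _ = r := by simp only [θ]; push_cast; field_simp
    have hrest : dist (AffineMap.lineMap x y θ) y ≤ N * r := by
      rw [dist_lineMap_right, Real.norm_of_nonneg (sub_nonneg.mpr hθ1)]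
      calc (1 - θ) * dist x y ≤ (1 - θ) * ((N + 1 : ℕ) * r) := by
            have := sub_nonneg.mpr hθ1
            gcongr
        _ = N * r := by simp only [θ]; push_cast; field_simp; ring
    have hdoubled := hu.doubling hκ hr hm (hKΩ x hx) hlower
    rw [pow_succ', ← mul_assoc]
    exact ih (hKconv.lineMap_mem hx hy ⟨hθ0, hθ1⟩) hrest (mul_pos hm (doublingConst_pos hκ))
      fun z hz ↦ hdoubled z (closedBall_subset_closedBall' (by linarith) hz)

theorem weak_harnack (n : ℕ) (hκ : 0 < κ) {ρ : ℝ} (hρ : ρ < 1) {η : ℝ} (hη : 0 < η) :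
    ∃ c : ℝ, 0 < c ∧ ∀ u : Eucl n → ℝ, NonnegSupersolution κ (ball 0 1) u →
      ENNReal.ofReal η ≤ volume {x ∈ ball (0 : Eucl n) 1 | 1 ≤ u x} → ∀ y ∈ ball 0 ρ, c ≤ u y := by
  have hhalf : 0 < ENNReal.ofReal (η / 2) := ENNReal.ofReal_pos.mpr (half_pos hη)
  obtain ⟨R, ⟨hρR, hR⟩, hshell⟩ :=
    exists_measure_ball_sdiff_ball_lt (volume : Measure (Eucl n)) hρ hhalf
  set r := (1 - R) / 4 with hr_def
  have hr : 0 < r := by linarith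
  have hinside : ∀ x ∈ ball (0 : Eucl n) R, closedBall x (4 * r) ⊆ ball 0 1 := fun x hx ↦
    closedBall_subset_ball' (by linarith [mem_ball.mp hx])
  obtain ⟨K, hK⟩ := ENNReal.exists_nat_mul_gt hhalf.ne' (b := ENNReal.ofReal (5 ^ n) *
    ENNReal.ofReal ((8 * κ) ^ n) * volume (ball (0 : Eucl n) 1))
    (ENNReal.mul_ne_top (ENNReal.mul_ne_top ENNReal.ofReal_ne_top ENNReal.ofReal_ne_top)
      measure_ball_lt_top.ne)
  have hγ := pow_pos (spreadConst_pos hκ) K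
  have hβ := pow_pos (doublingConst_pos hκ) ⌈2 / r⌉₊
  refine ⟨_, mul_pos hγ hβ, fun u hu hmeas y hy ↦ ?_⟩
  have hG : ENNReal.ofReal (η / 2) ≤ volume {x ∈ ball (0 : Eucl n) R | 1 ≤ u x} := by
    have hcover : {x ∈ ball (0 : Eucl n) 1 | 1 ≤ u x} ⊆
        {x ∈ ball (0 : Eucl n) R | 1 ≤ u x} ∪ ball 0 1 \ ball 0 R := fun x hx ↦
      (em (x ∈ ball 0 R)).imp (fun h ↦ ⟨h, hx.2⟩) fun h ↦ ⟨hx.1, h⟩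
    refine (ENNReal.add_le_add_iff_right (ENNReal.ofReal_ne_top (r := η / 2))).mp ?_
    calc ENNReal.ofReal (η / 2) + ENNReal.ofReal (η / 2) = ENNReal.ofReal η := by
          rw [← ENNReal.ofReal_add (by positivity) (by positivity), add_halves]
      _ ≤ volume {x ∈ ball (0 : Eucl n) 1 | 1 ≤ u x} := hmeas
      _ ≤ _ := (measure_mono hcover).trans (measure_union_le _ _)
      _ ≤ _ := by gcongr
  obtain ⟨x, ⟨hxR, -⟩, hlower⟩ := hu.exists_le_on_closedBall hκ hr (fun x hx ↦ hinside x hx.1)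
    (fun x hx ↦ hx.2) (hK.trans_le (mul_le_mul_right hG K))
  have hyR : y ∈ ball 0 R := ball_subset_ball hρR.le hy
  refine hu.mul_doublingConst_pow_le hκ (convex_ball 0 R) hr hinside _ hxR hyR ?_ hγ
    fun z hz ↦ hlower z (closedBall_subset_closedBall (by linarith) hz)
  calc dist x y ≤ 2 := by linarith [dist_triangle_right x y 0, mem_ball.mp hxR, mem_ball.mp hyR]
    _ = 2 / r * r := by field_simp
    _ ≤ ⌈2 / r⌉₊ * r := by gcongr; exact Nat.le_ceil _

end NonnegSupersolution

end Propagation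

theorem weak_harnack_nondivergence_general (n : ℕ) {κ : ℝ} (hκ : 0 < κ) {ρ : ℝ} (hρ : ρ < 1)
    {η : ℝ} (hη : 0 < η) :
    ∃ c : ℝ, 0 < c ∧ c < 1 ∧ ∀ A : Eucl n → Matrix (Fin n) (Fin n) ℝ,
      (∀ x ∈ ball 0 1, EllipticRatio κ (A x)) →
      ∀ φ : Eucl n → ℝ, NondivSubsolution A (ball 0 1) φ → (∀ x ∈ ball 0 1, φ x ≤ 1) →
        ENNReal.ofReal η ≤ volume {x ∈ ball 0 1 | φ x ≤ 0} → ∀ x ∈ ball 0 ρ, φ x ≤ 1 - c := by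
  obtain ⟨c, hc, hharnack⟩ := NonnegSupersolution.weak_harnack n hκ hρ hη
  refine ⟨min c (1 / 2), by positivity, (min_le_right _ _).trans_lt (by norm_num), ?_⟩
  intro A hA φ hφ hφ1 hmeas x hx
  have hu : NonnegSupersolution κ (ball 0 1) fun y ↦ 1 - φ y :=
    { isOpen := isOpen_ball
      contDiffOn := contDiffOn_const.sub hφ.1
      nonneg y hy := sub_nonneg.mpr (hφ1 y hy)
      exists_trace_nonpos y hy :=
        ⟨A y, hA y hy, by simpa [hess_const_sub] using hφ.trace_mul_hess_nonneg hy⟩ }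
  have hmeas' : ENNReal.ofReal η ≤ volume {y ∈ ball 0 1 | 1 ≤ 1 - φ y} := by
    simpa only [le_sub_self_iff] using hmeas
  linarith [hharnack _ hu hmeas' x hx, min_le_left c (1 / 2)]

/-- **Weak Harnack inequality for subsolutions, non-divergence form (Krylov–Safonov,
Theorem 1.2)**: for every `η > 0` there is `c(η) ∈ (0,1)` depending only on `η, n, λ, Λ`
such that any `C²` subsolution `φ` of `tr(A D²φ) ≥ 0` in `B_1` with `φ ≤ 1` in `B_1` and
`|{φ ≤ 0}| ≥ η` satisfies `φ ≤ 1 - c(η)` in `B_{1/2}`. -/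
theorem weak_harnack_nondivergence (n : ℕ) (hn : 2 ≤ n) (lam Lam : ℝ)
    (hlam : 0 < lam) (hlL : lam ≤ Lam) (η : ℝ) (hη : 0 < η) :
    ∃ c : ℝ, 0 < c ∧ c < 1 ∧
      ∀ A : Eucl n → Matrix (Fin n) (Fin n) ℝ,
        UnifElliptic lam Lam (ball (0 : Eucl n) 1) A →
        ∀ φ : Eucl n → ℝ, NondivSubsolution A (ball (0 : Eucl n) 1) φ →
          (∀ x ∈ ball (0 : Eucl n) 1, φ x ≤ 1) →
          ENNReal.ofReal η ≤ volume {x ∈ ball (0 : Eucl n) 1 | φ x ≤ 0} →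
          ∀ x ∈ ball (0 : Eucl n) (1 / 2), φ x ≤ 1 - c := by
  have hκ : 0 < n * Lam / lam := by
    have := hlam.trans_le hlL
    have : (0 : ℝ) < n := Nat.cast_pos.mpr (by lia)
    positivity
  obtain ⟨c, hc, hc1, hharnack⟩ :=
    weak_harnack_nondivergence_general n hκ (ρ := 1 / 2) (by norm_num) hη
  exact ⟨c, hc, hc1, fun A hA ↦ hharnack A fun x hx ↦ hA.ellipticRatio (by lia) hlam hx⟩

end
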